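/- arXiv:1606.02959 — 3 statements merged into one kernel-verified Lean document; each statement's English description precedes it below -/
import Mathlib

section
/- For all natural numbers m, n and indices i, j with 0 ≤ i ≤ m and 0 ≤ j ≤ n, the integral of the product of two Bernstein polynomials over the unit interval satisfies ∫₀¹ B_i^m(t) · B_j^n(t) dt = C(m,i)·C(n,j) / [(m+n+1)·C(m+n,i+j)]. -/
/-!
Up to a ratio of binomial coefficients, `B_i^m * B_j^n` is the single Bernstein polynomial
`B_{i+j}^{m+n}`, so it suffices that `∫₀¹ B_i^n = 1 / (n + 1)` for every `i ≤ n`. Now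
`B_{i+1}^{n+1}` is an antiderivative of `(n + 1) (B_i^n - B_{i+1}^n)`, and for `i < n` it vanishes
at both `0` and `1`; hence the integral does not depend on `i`. At `i = 0` the antiderivative of
`(n + 1) B_0^n` is `-B_0^{n+1}`, which rises from `-1` to `0`.
-/

/-- The Bernstein polynomial `B_i^n(t) = C(n,i) t^i (1-t)^(n-i)`. -/
noncomputable def bern (n i : ℕ) (t : ℝ) : ℝ :=
  (n.choose i : ℝ) * t ^ i * (1 - t) ^ (n - i)

open Polynomial

lemma bern_eq_eval (n i : ℕ) (t : ℝ) : bern n i t = (bernsteinPolynomial ℝ n i).eval t := by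
  simp [bern, bernsteinPolynomial]

lemma choose_mul_bernsteinPolynomial_mul_bernsteinPolynomial (R : Type*) [CommRing R]
    {m n i j : ℕ} (hi : i ≤ m) (hj : j ≤ n) :
    ((m + n).choose (i + j) : R[X]) * (bernsteinPolynomial R m i * bernsteinPolynomial R n j) =
      (m.choose i * n.choose j : R[X]) * bernsteinPolynomial R (m + n) (i + j) := by
  have exponent_add : m + n - (i + j) = (m - i) + (n - j) := by omega
  simp only [bernsteinPolynomial, exponent_add, pow_add]
  ring

lemma bern_mul_bern {m n i j : ℕ} (hi : i ≤ m) (hj : j ≤ n) (t : ℝ) :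
    bern m i t * bern n j t =
      (m.choose i * n.choose j / (m + n).choose (i + j) : ℝ) * bern (m + n) (i + j) t := by
  have choose_ne_zero : ((m + n).choose (i + j) : ℝ) ≠ 0 :=
    mod_cast Nat.choose_ne_zero (add_le_add hi hj)
  rw [div_mul_eq_mul_div, eq_div_iff choose_ne_zero, mul_comm]
  simpa [bern_eq_eval] using
    congrArg (eval t) (choose_mul_bernsteinPolynomial_mul_bernsteinPolynomial ℝ hi hj)

lemma integral_eval_derivative (p : ℝ[X]) (a b : ℝ) :
    ∫ t in a..b, p.derivative.eval t = p.eval b - p.eval a :=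
  intervalIntegral.integral_eq_sub_of_hasDerivAt (fun t _ => p.hasDerivAt t)
    (p.derivative.continuous.intervalIntegrable a b)

lemma integral_eval_bernsteinPolynomial_zero (n : ℕ) :
    ∫ t in (0 : ℝ)..1, (bernsteinPolynomial ℝ n 0).eval t = 1 / (n + 1) := by
  have ftc : -(n + 1 : ℝ) * ∫ t in (0 : ℝ)..1, (bernsteinPolynomial ℝ n 0).eval t = -1 := by
    simpa [bernsteinPolynomial.derivative_zero, bernsteinPolynomial.eval_at_0,
      bernsteinPolynomial.eval_at_1]
      using integral_eval_derivative (bernsteinPolynomial ℝ (n + 1) 0) 0 1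
  rw [eq_div_iff n.cast_add_one_ne_zero]
  linear_combination -ftc

lemma integral_eval_bernsteinPolynomial_succ {n i : ℕ} (hi : i < n) :
    ∫ t in (0 : ℝ)..1, (bernsteinPolynomial ℝ n (i + 1)).eval t =
      ∫ t in (0 : ℝ)..1, (bernsteinPolynomial ℝ n i).eval t := by
  have integrable (k : ℕ) : IntervalIntegrable (fun t => (bernsteinPolynomial ℝ n k).eval t)
      MeasureTheory.volume 0 1 :=
    (bernsteinPolynomial ℝ n k).continuous.intervalIntegrable 0 1
  have ftc : (n + 1 : ℝ) * ((∫ t in (0 : ℝ)..1, (bernsteinPolynomial ℝ n i).eval t) -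
      ∫ t in (0 : ℝ)..1, (bernsteinPolynomial ℝ n (i + 1)).eval t) = 0 := by
    simpa [bernsteinPolynomial.derivative_succ_aux, bernsteinPolynomial.eval_at_0,
      bernsteinPolynomial.eval_at_1, hi.ne, integrable]
      using integral_eval_derivative (bernsteinPolynomial ℝ (n + 1) (i + 1)) 0 1
  have difference_zero := (mul_eq_zero.mp ftc).resolve_left n.cast_add_one_ne_zero
  exact (sub_eq_zero.mp difference_zero).symm

theorem integral_eval_bernsteinPolynomial {n i : ℕ} (hi : i ≤ n) :
    ∫ t in (0 : ℝ)..1, (bernsteinPolynomial ℝ n i).eval t = 1 / (n + 1) := by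
  induction i with
  | zero => exact integral_eval_bernsteinPolynomial_zero n
  | succ i ih => rw [integral_eval_bernsteinPolynomial_succ hi, ih (Nat.le_of_succ_le hi)]

theorem integral_bern {n i : ℕ} (hi : i ≤ n) :
    ∫ t in (0 : ℝ)..1, bern n i t = 1 / (n + 1) := by
  simp only [bern_eq_eval, integral_eval_bernsteinPolynomial hi]

/-- Integral of the product of two Bernstein polynomials over the unit interval:
`∫₀¹ B_i^m(t)·B_j^n(t) dt = C(m,i)·C(n,j)/[(m+n+1)·C(m+n,i+j)]`. -/
theorem bernstein_product_integral (m n i j : ℕ) (hi : i ≤ m) (hj : j ≤ n) :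
    ∫ t in (0:ℝ)..1, bern m i t * bern n j t =
      (m.choose i : ℝ) * (n.choose j : ℝ) /
        (((m + n : ℕ) + 1 : ℝ) * ((m + n).choose (i + j) : ℝ)) := by
  calc
    ∫ t in (0:ℝ)..1, bern m i t * bern n j t
    _ = (m.choose i * n.choose j / (m + n).choose (i + j) : ℝ) *
          ∫ t in (0:ℝ)..1, bern (m + n) (i + j) t := by
      simp only [bern_mul_bern hi hj, intervalIntegral.integral_const_mul]
    _ = (m.choose i * n.choose j / (m + n).choose (i + j) : ℝ) * (1 / ((m + n : ℕ) + 1)) := by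
      rw [integral_bern (add_le_add hi hj)]
    _ = (m.choose i : ℝ) * (n.choose j : ℝ) /
          (((m + n : ℕ) + 1 : ℝ) * ((m + n).choose (i + j) : ℝ)) := by
      rw [mul_one_div, div_div, mul_comm (_ + 1)]
end

section
/- Let R(u,v,w) = Σ_{i=0}^{l₁} Σ_{j=0}^{m₁} Σ_{k=0}^{n₁} a_{ijk} B_i^{l₁}(u) B_j^{m₁}(v) B_k^{n₁}(w) and S(u,v,w) = Σ_{i=0}^{l₂} Σ_{j=0}^{m₂} Σ_{k=0}^{n₂} b_{ijk} B_i^{l₂}(u) B_j^{m₂}(v) B_k^{n₂}(w) be trivariate Bézier functions with real coefficients a_{ijk}, b_{ijk}. Then their product satisfies R(u,v,w)·S(u,v,w) = Σ_{i=0}^{l₁+l₂} Σ_{j=0}^{m₁+m₂} Σ_{k=0}^{n₁+n₂} c_{ijk} B_i^{l₁+l₂}(u) B_j^{m₁+m₂}(v) B_k^{n₁+n₂}(w), where c_{ijk} = Σ_{r=max(0,i−l₂)}^{min(i,l₁)} Σ_{s=max(0,j−m₂)}^{min(j,m₁)} Σ_{t=max(0,k−n₂)}^{min(k,n₁)} [C(l₁,r)·C(l₂,i−r)·C(m₁,s)·C(m₂,j−s)·C(n₁,t)·C(n₂,k−t)]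 · a_{rst} · b_{(i−r),(j−s),(k−t)} / [C(l₁+l₂,i)·C(m₁+m₂,j)·C(n₁+n₂,k)]. -/
/-!
For `r ≤ p` and `s ≤ q` the product `B_r^p B_s^q` is a multiple of `B_{r+s}^{p+q}`. Hence, for
any bilinear `β`, the value of `β` on two univariate Bézier functions is the Bézier function whose
coefficients are a weighted convolution of the given ones. This convolution is itself bilinear in
the coefficient sequences, and a trivariate Bézier function is a univariate one with coefficients
in a space of sequences, three times over; so the univariate product formula, applied first to
`β`, then to its convolution, then to the convolution of that, gives the trivariate one.
-/

open Finset

theorem bern_mul_bern_s4 {p q r s : ℕ} (hr : r ≤ p) (hs : s ≤ q) (t : ℝ) :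
    bern p r t * bern q s t =
      bern (p + q) (r + s) t * (p.choose r * q.choose s / (p + q).choose (r + s)) := by
  have choose_ne_zero : ((p + q).choose (r + s) : ℝ) ≠ 0 :=
    Nat.cast_ne_zero.mpr (Nat.choose_ne_zero (add_le_add hr hs))
  have sub_add_sub : p + q - (r + s) = (p - r) + (q - s) := by omega
  simp only [bern, sub_add_sub, pow_add]
  field_simp

theorem sum_range_sum_range_eq_sum_sum_Icc {M : Type*} [AddCommMonoid M] (p q : ℕ)
    (F : ℕ → ℕ → M) :
    ∑ x ∈ range (p + 1), ∑ y ∈ range (q + 1), F x y =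
      ∑ i ∈ range (p + q + 1), ∑ r ∈ Icc (i - q) (min i p), F r (i - r) := by
  rw [sum_sigma', sum_sigma']
  refine sum_bij' (fun x _ => ⟨x.1 + x.2, x.1⟩) (fun x _ => ⟨x.2, x.1 - x.2⟩) ?_ ?_ ?_ ?_ ?_ <;>
    grind

section Bezier

variable {M N P : Type*} [AddCommMonoid M] [Module ℝ M] [AddCommMonoid N] [Module ℝ N]
  [AddCommMonoid P] [Module ℝ P]

/-- The value at `t` of the univariate Bézier function of degree `n`, as a linear function of its
coefficient sequence. Coefficients lie in any real module, and those of index above `n` are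
ignored. -/
noncomputable def bezier (n : ℕ) (t : ℝ) : (ℕ → M) →ₗ[ℝ] M :=
  ∑ i ∈ range (n + 1), bern n i t • LinearMap.proj i

theorem bezier_apply (n : ℕ) (t : ℝ) (c : ℕ → M) :
    bezier n t c = ∑ i ∈ range (n + 1), bern n i t • c i := by
  simp only [bezier, LinearMap.sum_apply, LinearMap.smul_apply, LinearMap.proj_apply]

/-- The weighted convolution giving the coefficients, in degree `p + q`, of the `β`-product of two
Bézier functions of degrees `p` and `q`. It is bundled as a bilinear map so that it can be
iterated, one variable at a time. -/
noncomputable def bezierConv (p q : ℕ) (β : M →ₗ[ℝ] N →ₗ[ℝ] P) :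
    (ℕ → M) →ₗ[ℝ] (ℕ → N) →ₗ[ℝ] (ℕ → P) :=
  LinearMap.mk₂ ℝ
    (fun f g i => ∑ r ∈ Icc (i - q) (min i p),
      (p.choose r * q.choose (i - r) / (p + q).choose i : ℝ) • β (f r) (g (i - r)))
    (fun f₁ f₂ g => by ext i; simp [sum_add_distrib])
    (fun c f g => by ext i; simp [smul_sum, smul_comm c])
    (fun f g₁ g₂ => by ext i; simp [sum_add_distrib])
    (fun c f g => by ext i; simp [smul_sum, smul_comm c])

theorem bezierConv_apply (p q : ℕ) (β : M →ₗ[ℝ] N →ₗ[ℝ] P) (f : ℕ → M) (g : ℕ → N) (i : ℕ) :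
    bezierConv p q β f g i = ∑ r ∈ Icc (i - q) (min i p),
      (p.choose r * q.choose (i - r) / (p + q).choose i : ℝ) • β (f r) (g (i - r)) :=
  rfl

theorem map_bezier_bezier (p q : ℕ) (t : ℝ) (β : M →ₗ[ℝ] N →ₗ[ℝ] P) (f : ℕ → M) (g : ℕ → N) :
    β (bezier p t f) (bezier q t g) = bezier (p + q) t (bezierConv p q β f g) := by
  calc β (bezier p t f) (bezier q t g)
    _ = ∑ r ∈ range (p + 1), ∑ s ∈ range (q + 1),
          (bern p r t * bern q s t) • β (f r) (g s) := by
      simp only [bezier_apply, map_sum, map_smul, LinearMap.sum_apply, LinearMap.smul_apply,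
        smul_sum, smul_smul]
      rw [sum_comm]
      simp only [mul_comm]
    _ = ∑ i ∈ range (p + q + 1), ∑ r ∈ Icc (i - q) (min i p),
          (bern p r t * bern q (i - r) t) • β (f r) (g (i - r)) :=
      sum_range_sum_range_eq_sum_sum_Icc p q _
    _ = bezier (p + q) t (bezierConv p q β f g) := by
      simp only [bezier_apply, bezierConv_apply, smul_sum, smul_smul]
      refine sum_congr rfl fun i _ => sum_congr rfl fun r hr => ?_
      obtain ⟨hir, hri, hrp⟩ : i - q ≤ r ∧ r ≤ i ∧ r ≤ p := by simpa using hr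
      rw [bern_mul_bern_s4 hrp (by omega), Nat.add_sub_cancel' hri]

theorem bezier_bezier_bezier (l m n : ℕ) (u v w : ℝ) (a : ℕ → ℕ → ℕ → M) :
    bezier n w (bezier m v (bezier l u a)) =
      ∑ i ∈ range (l + 1), ∑ j ∈ range (m + 1), ∑ k ∈ range (n + 1),
        (bern l i u * bern m j v * bern n k w) • a i j k := by
  simp only [bezier_apply, Finset.sum_apply, Pi.smul_apply, smul_sum, smul_smul]
  rw [sum_comm_cycle]
  refine sum_congr rfl fun i _ => sum_comm.trans ?_
  simp only [mul_comm, mul_left_comm]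

theorem bezierConv_bezierConv_bezierConv_apply (l₁ m₁ n₁ l₂ m₂ n₂ : ℕ)
    (β : M →ₗ[ℝ] N →ₗ[ℝ] P) (a : ℕ → ℕ → ℕ → M) (b : ℕ → ℕ → ℕ → N) (i j k : ℕ) :
    bezierConv l₁ l₂ (bezierConv m₁ m₂ (bezierConv n₁ n₂ β)) a b i j k =
      ∑ r ∈ Icc (i - l₂) (min i l₁), ∑ s ∈ Icc (j - m₂) (min j m₁),
        ∑ t ∈ Icc (k - n₂) (min k n₁),
          ((l₁.choose r * l₂.choose (i - r) * m₁.choose s * m₂.choose (j - s) *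
              n₁.choose t * n₂.choose (k - t) : ℝ) /
            ((l₁ + l₂).choose i * (m₁ + m₂).choose j * (n₁ + n₂).choose k)) •
          β (a r s t) (b (i - r) (j - s) (k - t)) := by
  simp only [bezierConv_apply, Finset.sum_apply, Pi.smul_apply, smul_sum, smul_smul,
    div_mul_div_comm, mul_assoc]

theorem trivariate_bezier_product_general (l₁ m₁ n₁ l₂ m₂ n₂ : ℕ) (β : M →ₗ[ℝ] N →ₗ[ℝ] P)
    (a : ℕ → ℕ → ℕ → M) (b : ℕ → ℕ → ℕ → N) (u v w : ℝ) :
    β (∑ i ∈ range (l₁ + 1), ∑ j ∈ range (m₁ + 1), ∑ k ∈ range (n₁ + 1),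
        (bern l₁ i u * bern m₁ j v * bern n₁ k w) • a i j k)
      (∑ i ∈ range (l₂ + 1), ∑ j ∈ range (m₂ + 1), ∑ k ∈ range (n₂ + 1),
        (bern l₂ i u * bern m₂ j v * bern n₂ k w) • b i j k) =
    ∑ i ∈ range (l₁ + l₂ + 1), ∑ j ∈ range (m₁ + m₂ + 1), ∑ k ∈ range (n₁ + n₂ + 1),
      (bern (l₁ + l₂) i u * bern (m₁ + m₂) j v * bern (n₁ + n₂) k w) •
        ∑ r ∈ Icc (i - l₂) (min i l₁), ∑ s ∈ Icc (j - m₂) (min j m₁),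
          ∑ t ∈ Icc (k - n₂) (min k n₁),
            ((l₁.choose r * l₂.choose (i - r) * m₁.choose s * m₂.choose (j - s) *
                n₁.choose t * n₂.choose (k - t) : ℝ) /
              ((l₁ + l₂).choose i * (m₁ + m₂).choose j * (n₁ + n₂).choose k)) •
            β (a r s t) (b (i - r) (j - s) (k - t)) := by
  simp only [← bezier_bezier_bezier, map_bezier_bezier,
    ← bezierConv_bezierConv_bezierConv_apply]

end Bezier

/-- Product of two trivariate Bézier functions: the product of a trivariate Bézier
function of degree `(l₁,m₁,n₁)` with coefficients `a` and one of degree `(l₂,m₂,n₂)`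
with coefficients `b` is a trivariate Bézier function of degree `(l₁+l₂,m₁+m₂,n₁+n₂)`
with coefficients `c_{ijk}` given by the stated convolution formula.  (In `ℕ`,
`i - l₂` equals `max(0, i - l₂)`, so `Finset.Icc (i - l₂) (min i l₁)` is the index
range `max(0,i−l₂) ≤ r ≤ min(i,l₁)`.) -/
theorem trivariate_bezier_product (l₁ m₁ n₁ l₂ m₂ n₂ : ℕ)
    (a b : ℕ → ℕ → ℕ → ℝ) (u v w : ℝ) :
    (∑ i ∈ range (l₁ + 1), ∑ j ∈ range (m₁ + 1), ∑ k ∈ range (n₁ + 1),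
        a i j k * bern l₁ i u * bern m₁ j v * bern n₁ k w) *
      (∑ i ∈ range (l₂ + 1), ∑ j ∈ range (m₂ + 1), ∑ k ∈ range (n₂ + 1),
        b i j k * bern l₂ i u * bern m₂ j v * bern n₂ k w) =
    ∑ i ∈ range (l₁ + l₂ + 1), ∑ j ∈ range (m₁ + m₂ + 1), ∑ k ∈ range (n₁ + n₂ + 1),
      (∑ r ∈ Finset.Icc (i - l₂) (min i l₁), ∑ s ∈ Finset.Icc (j - m₂) (min j m₁),
        ∑ t ∈ Finset.Icc (k - n₂) (min k n₁),
          ((l₁.choose r : ℝ) * (l₂.choose (i - r) : ℝ) * (m₁.choose s : ℝ) *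
              (m₂.choose (j - s) : ℝ) * (n₁.choose t : ℝ) * (n₂.choose (k - t) : ℝ)) *
            a r s t * b (i - r) (j - s) (k - t) /
            (((l₁ + l₂).choose i : ℝ) * ((m₁ + m₂).choose j : ℝ) *
              ((n₁ + n₂).choose k : ℝ))) *
        bern (l₁ + l₂) i u * bern (m₁ + m₂) j v * bern (n₁ + n₂) k w := by
  simpa only [LinearMap.mul_apply', smul_eq_mul, mul_comm (bern _ _ _ * bern _ _ _ * bern _ _ _),
    div_mul_eq_mul_div, ← mul_assoc] using
    trivariate_bezier_product_general l₁ m₁ n₁ l₂ m₂ n₂ (LinearMap.mul ℝ ℝ) a b u v w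
end

section
/- Let λ > 0 and define f : ℝ³ → ℝ by f(x) = (max(0, 1 − ‖x‖/λ))⁶ · (3 + 18·(‖x‖/λ) + 35·(‖x‖/λ)²), where ‖·‖ is the Euclidean norm. Then f is four times continuously differentiable on ℝ³ (i.e., f is of class C⁴), and f(x) = 0 whenever ‖x‖ ≥ λ, so the support of f is contained in the closed ball of radius λ centered at the origin. -/
/-!
The profile `(1 - r)⁶ (3 + 18 r + 35 r²)` has no `r` and no `r³` term: it equals
`A (r²) + r⁵ B (r²)` for polynomials `A` and `B`. At the origin the only obstruction to smoothness
is therefore `‖x‖⁵`, which is positively homogeneous of degree `5`; its derivatives of order `j ≤ 4`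
are homogeneous of degree `5 - j ≥ 1`, and they are bounded on the unit sphere because the isometry
group is transitive there, so they extend continuously by `0`. Across the sphere `r = 1` the factor
`(1 - r)₊⁶` is `C⁵` by the same homogeneity argument.
-/

open Asymptotics Filter Topology

section Homogeneity

variable {E F : Type*} [NormedAddCommGroup E] [NormedSpace ℝ E]
  [NormedAddCommGroup F] [NormedSpace ℝ F] {d n : ℕ} {f : E → F}

/-- Positive homogeneity of natural degree `d`: scaling by `t > 0` multiplies the value by `t ^ d`.
Nothing is required of `t ≤ 0`, so that powers of the norm qualify. -/
def PosHomogeneous (d : ℕ) (f : E → F) : Prop :=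
  ∀ t : ℝ, 0 < t → ∀ x, f (t • x) = t ^ d • f x

namespace PosHomogeneous

protected theorem map_zero (hf : PosHomogeneous (d + 1) f) : f 0 = 0 := by
  have h_two : (2 : ℝ) ^ (d + 1) • f 0 = (1 : ℝ) • f 0 := by
    rw [← hf 2 two_pos, smul_zero, one_smul]
  by_contra h_ne
  exact (one_lt_pow₀ one_lt_two d.succ_ne_zero).ne' (smul_left_injective ℝ h_ne h_two)

theorem norm_le_mul_pow (hf : PosHomogeneous (d + 1) f) {C : ℝ}
    (hC : ∀ x, ‖x‖ = 1 → ‖f x‖ ≤ C) (x : E) : ‖f x‖ ≤ C * ‖x‖ ^ (d + 1) := by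
  rcases eq_or_ne x 0 with rfl | hx
  · simp [hf.map_zero]
  have h_pos : 0 < ‖x‖ := norm_pos_iff.2 hx
  calc ‖f x‖ = ‖f (‖x‖ • ‖x‖⁻¹ • x)‖ := by rw [smul_inv_smul₀ h_pos.ne']
    _ = ‖f (‖x‖⁻¹ • x)‖ * ‖x‖ ^ (d + 1) := by
      rw [hf _ h_pos, norm_smul, norm_pow, norm_norm, mul_comm]
    _ ≤ C * ‖x‖ ^ (d + 1) := by
      gcongr
      exact hC _ (norm_smul_inv_norm (𝕜 := ℝ) hx)

theorem isBigO_norm_pow (hf : PosHomogeneous (d + 1) f)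
    (hb : ∃ C, ∀ x, ‖x‖ = 1 → ‖f x‖ ≤ C) : f =O[𝓝 0] fun x ↦ ‖x‖ ^ (d + 1) := by
  obtain ⟨C, hC⟩ := hb
  exact .of_bound C (.of_forall fun x ↦ by simpa using hf.norm_le_mul_pow hC x)

theorem continuousAt_zero (hf : PosHomogeneous (d + 1) f)
    (hb : ∃ C, ∀ x, ‖x‖ = 1 → ‖f x‖ ≤ C) : ContinuousAt f 0 := by
  rw [ContinuousAt, hf.map_zero]
  exact (hf.isBigO_norm_pow hb).trans_tendsto
    ((continuous_norm.pow (d + 1)).tendsto' 0 0 (by simp))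

theorem hasFDerivAt_zero (hf : PosHomogeneous (d + 2) f)
    (hb : ∃ C, ∀ x, ‖x‖ = 1 → ‖f x‖ ≤ C) : HasFDerivAt f (0 : E →L[ℝ] F) 0 := by
  rw [hasFDerivAt_iff_isLittleO_nhds_zero]
  simpa [hf.map_zero] using
    (hf.isBigO_norm_pow hb).trans_isLittleO (isLittleO_norm_pow_id (by lia))

protected theorem fderiv (hf : PosHomogeneous (d + 1) f) : PosHomogeneous d (fderiv ℝ f) := by
  intro t ht x
  have h_scale : t • fderiv ℝ f (t • x) = t • t ^ d • fderiv ℝ f x :=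
    calc t • fderiv ℝ f (t • x)
        = fderiv ℝ (fun y ↦ f (t • y)) x := (fderiv_comp_smul t).symm
      _ = fderiv ℝ (t ^ (d + 1) • f) x := by rw [funext (hf t ht)]; rfl
      _ = t • t ^ d • fderiv ℝ f x := by
        rw [fderiv_const_smul_field, Pi.smul_apply, pow_succ', mul_smul]
  exact smul_right_injective _ ht.ne' h_scale

protected theorem iteratedFDeriv (j : ℕ) (hf : PosHomogeneous (d + j) f) :
    PosHomogeneous d (iteratedFDeriv ℝ j f) := by
  induction j generalizing d with
  | zero =>
    intro t ht x
    ext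
    simpa using hf t ht x
  | succ j ih =>
    intro t ht x
    have h_fderiv := (ih (d := d + 1) (by rwa [add_right_comm])).fderiv t ht x
    simp only [iteratedFDeriv_succ_eq_comp_left, Function.comp_apply, h_fderiv, map_smul]

protected theorem contDiff (hf : PosHomogeneous (n + 1) f) (hs : ∀ x ≠ 0, ContDiffAt ℝ n f x)
    (hb : ∀ j ≤ n, ∃ C, ∀ x, ‖x‖ = 1 → ‖iteratedFDeriv ℝ j f x‖ ≤ C) :
    ContDiff ℝ n f := by
  refine contDiff_nat_iff_continuous_differentiable.2 ⟨fun j hj ↦ ?_, fun j hj x ↦ ?_⟩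
  · refine continuous_iff_continuousAt.2 fun x ↦ ?_
    rcases eq_or_ne x 0 with rfl | hx
    · have h_homog : PosHomogeneous (n - j + 1) (iteratedFDeriv ℝ j f) :=
        .iteratedFDeriv j (by rwa [show n - j + 1 + j = n + 1 by lia])
      exact h_homog.continuousAt_zero (hb j hj)
    · exact ((hs x hx).iteratedFDeriv_right (m := 0) (by simpa using hj)).continuousAt
  · rcases eq_or_ne x 0 with rfl | hx
    · have h_homog : PosHomogeneous (n - j - 1 + 2) (iteratedFDeriv ℝ j f) :=
        .iteratedFDeriv j (by rwa [show n - j - 1 + 2 + j = n + 1 by lia])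
      exact (h_homog.hasFDerivAt_zero (hb j hj.le)).differentiableAt
    · exact (hs x hx).differentiableAt_iteratedFDeriv (by exact_mod_cast hj)

end PosHomogeneous

end Homogeneity

theorem contDiff_max_zero_pow (n : ℕ) : ContDiff ℝ n fun t : ℝ ↦ max 0 t ^ (n + 1) := by
  have h_homog : PosHomogeneous (n + 1) fun t : ℝ ↦ max 0 t ^ (n + 1) := fun s hs t ↦ by
    have h_max : max 0 (s * t) = s * max 0 t := by rw [mul_max_of_nonneg _ _ hs.le, mul_zero]
    simp only [smul_eq_mul, h_max, mul_pow]
  refine h_homog.contDiff (fun t ht ↦ ?_) fun j _ ↦ ?_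
  · rcases ht.lt_or_gt with h_neg | h_pos
    · refine (contDiffAt_const (c := (0 : ℝ))).congr_of_eventuallyEq ?_
      filter_upwards [gt_mem_nhds h_neg] with s hs
      rw [max_eq_left hs.le, zero_pow n.succ_ne_zero]
    · refine (contDiffAt_id.pow (n + 1)).congr_of_eventuallyEq ?_
      filter_upwards [lt_mem_nhds h_pos] with s hs
      rw [max_eq_right hs.le, id]
  · let D (t : ℝ) : ℝ := ‖iteratedFDeriv ℝ j (fun t : ℝ ↦ max 0 t ^ (n + 1)) t‖
    refine ⟨max (D 1) (D (-1)), fun t ht ↦ ?_⟩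
    rcases eq_or_eq_neg_of_abs_eq ht with rfl | rfl
    exacts [le_max_left _ _, le_max_right _ _]

section Radial

variable {E F : Type*} [NormedAddCommGroup E] [InnerProductSpace ℝ E]
  [NormedAddCommGroup F] [NormedSpace ℝ F] {n : ℕ}

theorem norm_iteratedFDeriv_comp_norm_eq (φ : ℝ → F) (j : ℕ) {x y : E} (hxy : ‖x‖ = ‖y‖) :
    ‖iteratedFDeriv ℝ j (fun z : E ↦ φ ‖z‖) x‖ = ‖iteratedFDeriv ℝ j (fun z : E ↦ φ ‖z‖) y‖ := by
  let ρ : E ≃ₗᵢ[ℝ] E := (ℝ ∙ (x - y))ᗮ.reflection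
  have h_invariant : (fun z : E ↦ φ ‖z‖) ∘ ρ = fun z ↦ φ ‖z‖ :=
    funext fun z ↦ congrArg φ (ρ.norm_map z)
  have h_norm := ρ.norm_iteratedFDeriv_comp_right (fun z ↦ φ ‖z‖) x j
  rwa [h_invariant, Submodule.reflection_sub hxy] at h_norm

theorem contDiff_norm_pow (n : ℕ) : ContDiff ℝ n fun x : E ↦ ‖x‖ ^ (n + 1) := by
  have h_homog : PosHomogeneous (n + 1) fun x : E ↦ ‖x‖ ^ (n + 1) := fun t ht x ↦ by
    simp only [norm_smul, Real.norm_of_nonneg ht.le, mul_pow, smul_eq_mul]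
  refine h_homog.contDiff (fun x hx ↦ (contDiffAt_norm ℝ hx).pow _) fun j _ ↦ ?_
  by_cases h_sphere : ∃ y : E, ‖y‖ = 1
  · obtain ⟨y, hy⟩ := h_sphere
    exact ⟨_, fun x hx ↦ (norm_iteratedFDeriv_comp_norm_eq (· ^ (n + 1)) j (hx.trans hy.symm)).le⟩
  · exact ⟨0, fun x hx ↦ (h_sphere ⟨x, hx⟩).elim⟩

theorem contDiff_comp_norm_of_eventuallyEq {φ A B : ℝ → F}
    (hφ : ∀ r > 0, ContDiffAt ℝ n φ r) (hA : ContDiff ℝ n A) (hB : ContDiff ℝ n B)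
    (h_eq : φ =ᶠ[𝓝[≥] 0] fun r ↦ A (r ^ 2) + r ^ (n + 1) • B (r ^ 2)) :
    ContDiff ℝ n fun x : E ↦ φ ‖x‖ := by
  refine contDiff_iff_contDiffAt.2 fun x ↦ ?_
  rcases eq_or_ne x 0 with rfl | hx
  · have h_smooth : ContDiff ℝ n fun x : E ↦ A (‖x‖ ^ 2) + ‖x‖ ^ (n + 1) • B (‖x‖ ^ 2) :=
      (hA.comp (contDiff_norm_sq ℝ)).add
        ((contDiff_norm_pow n).smul (hB.comp (contDiff_norm_sq ℝ)))
    have h_norm : Tendsto (fun x : E ↦ ‖x‖) (𝓝 0) (𝓝[≥] 0) :=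
      tendsto_nhdsWithin_iff.2 ⟨continuous_norm.tendsto' 0 0 norm_zero, .of_forall norm_nonneg⟩
    exact h_smooth.contDiffAt.congr_of_eventuallyEq (h_norm.eventually h_eq)
  · exact (hφ ‖x‖ (norm_pos_iff.2 hx)).comp x (contDiffAt_norm ℝ hx)

end Radial

/-- Wendland's radial profile `φ(r) = (1 − r)₊⁶ (3 + 18 r + 35 r²)` for support radius `1`. -/
def wendlandProfile (r : ℝ) : ℝ :=
  max 0 (1 - r) ^ 6 * (3 + 18 * r + 35 * r ^ 2)

theorem wendlandProfile_eq_zero_of_one_le {r : ℝ} (hr : 1 ≤ r) : wendlandProfile r = 0 := by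
  rw [wendlandProfile, max_eq_left (sub_nonpos.2 hr), zero_pow (by norm_num), zero_mul]

theorem contDiff_wendlandProfile : ContDiff ℝ 5 wendlandProfile := by
  have h_max : ContDiff ℝ 5 fun r : ℝ ↦ max 0 (1 - r) ^ 6 :=
    (contDiff_max_zero_pow 5).comp (contDiff_const.sub contDiff_id)
  exact h_max.mul (by fun_prop)

theorem wendlandProfile_eq_of_le_one {r : ℝ} (hr : r ≤ 1) :
    wendlandProfile r =
      3 - 28 * r ^ 2 + 210 * (r ^ 2) ^ 2 + 420 * (r ^ 2) ^ 3 + 35 * (r ^ 2) ^ 4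
        + r ^ 5 * (-448 - 192 * r ^ 2) := by
  rw [wendlandProfile, max_eq_right (sub_nonneg.2 hr)]
  ring

theorem contDiff_wendlandProfile_norm {E : Type*} [NormedAddCommGroup E] [InnerProductSpace ℝ E] :
    ContDiff ℝ 4 fun x : E ↦ wendlandProfile ‖x‖ := by
  refine contDiff_comp_norm_of_eventuallyEq (n := 4)
    (A := fun s ↦ 3 - 28 * s + 210 * s ^ 2 + 420 * s ^ 3 + 35 * s ^ 4)
    (B := fun s ↦ -448 - 192 * s)
    (fun r _ ↦ contDiff_wendlandProfile.contDiffAt.of_le (by norm_num))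
    (by fun_prop) (by fun_prop) ?_
  filter_upwards [mem_nhdsWithin_of_mem_nhds (Iic_mem_nhds one_pos)] with r hr
  exact wendlandProfile_eq_of_le_one hr

theorem wendland_csrbf_c4_compact_support_general {E : Type*} [NormedAddCommGroup E]
    [InnerProductSpace ℝ E] (lam : ℝ) (hlam : 0 < lam) (f : E → ℝ)
    (hf : ∀ x, f x = (max 0 (1 - ‖x‖ / lam)) ^ 6 *
      (3 + 18 * (‖x‖ / lam) + 35 * (‖x‖ / lam) ^ 2)) :
    ContDiff ℝ 4 f ∧ (∀ x, lam ≤ ‖x‖ → f x = 0) ∧ tsupport f ⊆ Metric.closedBall 0 lam := by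
  have h_profile : ∀ x, f x = wendlandProfile (‖x‖ / lam) := hf
  have h_zero : ∀ x, lam ≤ ‖x‖ → f x = 0 := fun x hx ↦ by
    rw [h_profile, wendlandProfile_eq_zero_of_one_le ((one_le_div hlam).2 hx)]
  have h_scaled : f = (fun x ↦ wendlandProfile ‖x‖) ∘ fun x ↦ lam⁻¹ • x := funext fun x ↦ by
    rw [h_profile, Function.comp_apply, norm_smul, Real.norm_of_nonneg (inv_nonneg.2 hlam.le),
      inv_mul_eq_div]
  refine ⟨?_, h_zero, closure_minimal (fun x hx ↦ ?_) Metric.isClosed_closedBall⟩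
  · rw [h_scaled]
    exact contDiff_wendlandProfile_norm.comp (contDiff_const_smul _)
  · rw [mem_closedBall_zero_iff]
    exact (not_le.1 (mt (h_zero x) hx)).le

/-- Wendland's compactly supported radial basis function
`φ(r) = (1−r)₊⁶ (3 + 18r + 35r²)` at `r = ‖x‖/λ` is of class `C⁴` on `ℝ³`, vanishes
whenever `‖x‖ ≥ λ`, and its support is contained in the closed ball of radius `λ`
centered at the origin. -/
theorem wendland_csrbf_c4_compact_support (lam : ℝ) (hlam : 0 < lam)
    (f : EuclideanSpace ℝ (Fin 3) → ℝ)
    (hf : ∀ x : EuclideanSpace ℝ (Fin 3),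
      f x = (max 0 (1 - ‖x‖ / lam)) ^ 6 *
        (3 + 18 * (‖x‖ / lam) + 35 * (‖x‖ / lam) ^ 2)) :
    ContDiff ℝ 4 f ∧
    (∀ x : EuclideanSpace ℝ (Fin 3), lam ≤ ‖x‖ → f x = 0) ∧
    tsupport f ⊆ Metric.closedBall 0 lam :=
  wendland_csrbf_c4_compact_support_general lam hlam f hf
end
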